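/- Let Δ ⊆ ℝ² be an LDP-polygon with gauge function g_Δ, and let t > 1 be a real number. Then the series Σ_{n ∈ ℤ²} t^{−g_Δ(n)} converges, and (t − 1)² · Σ_{n ∈ ℤ²} t^{−g_Δ(n)} = (t − 1)² + b·t + Σ_{n ∈ ℤ², 0 < g_Δ(n) < 1} ( t^{2 − g_Δ(n)} + t^{g_Δ(n)} ), where b := |{n ∈ ℤ² : g_Δ(n) = 1}| is the number of lattice points on the boundary of Δ, and the last (finite) sum runs over the nonzero interior lattice points of Δ. -/

import Mathlib

open MeasureTheory Filter Pointwise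

noncomputable section

/-- The canonical embedding of a lattice point of `ℤ^d` into `ℝ^d`. -/
def coeLat {d : ℕ} (n : Fin d → ℤ) : Fin d → ℝ := fun i => (n i : ℝ)

/-- The set of lattice points lying in a subset `S ⊆ ℝ^d`. -/
def latticePoints {d : ℕ} (S : Set (Fin d → ℝ)) : Set (Fin d → ℤ) :=
  {n | coeLat n ∈ S}

/-- A lattice polytope: the convex hull of finitely many points of `ℤ^d`. -/
def IsLatticePolytope {d : ℕ} (P : Set (Fin d → ℝ)) : Prop :=
  ∃ V : Finset (Fin d → ℤ), P = convexHull ℝ (coeLat '' (V : Set (Fin d → ℤ)))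

/-- The dual (polar) body `P* = {y | ⟨y,x⟩ ≥ -1 ∀ x ∈ P}`. -/
def polarDual {d : ℕ} (P : Set (Fin d → ℝ)) : Set (Fin d → ℝ) :=
  {y | ∀ x ∈ P, -1 ≤ ∑ i, y i * x i}

/-- Dimension of a subset of `ℝ^d`: the dimension of its affine span. -/
def dimSet {d : ℕ} (S : Set (Fin d → ℝ)) : ℕ :=
  Module.finrank ℝ (affineSpan ℝ S).direction

/-- A reflexive polytope: a lattice polytope containing the origin in its interior
whose dual is again a lattice polytope. -/
def IsReflexive {d : ℕ} (P : Set (Fin d → ℝ)) : Prop :=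
  IsLatticePolytope P ∧ (0 : Fin d → ℝ) ∈ interior P ∧ IsLatticePolytope (polarDual P)

/-- A (nonempty, exposed) face of dimension `k` of a polytope `P`. -/
def IsFaceOfDim {d : ℕ} (P : Set (Fin d → ℝ)) (k : ℕ) (θ : Set (Fin d → ℝ)) : Prop :=
  IsExposed ℝ P θ ∧ θ.Nonempty ∧ dimSet θ = k

/-- The dual face `θ* = {y ∈ P* | ⟨y,x⟩ = -1 ∀ x ∈ θ}` of a face `θ` of `P`. -/
def dualFace {d : ℕ} (P θ : Set (Fin d → ℝ)) : Set (Fin d → ℝ) :=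
  {y ∈ polarDual P | ∀ x ∈ θ, ∑ i, y i * x i = -1}

/-- The normalized volume of a `k`-dimensional lattice polytope `θ ⊆ ℝ^d`:
`lim_{m → ∞} k! ⬝ |mθ ∩ ℤ^d| / m^k`. -/
def normVol {d : ℕ} (k : ℕ) (θ : Set (Fin d → ℝ)) : ℝ :=
  limUnder atTop
    (fun m : ℕ => (Nat.factorial k : ℝ) * (latticePoints ((m : ℝ) • θ)).ncard / (m : ℝ) ^ k)

/-- An LDP-polygon: a 2-dimensional lattice polytope in `ℝ²` containing the origin
in its interior, all of whose vertices are primitive lattice vectors. -/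
def IsLDP (Δ : Set (Fin 2 → ℝ)) : Prop :=
  IsLatticePolytope Δ ∧ dimSet Δ = 2 ∧ (0 : Fin 2 → ℝ) ∈ interior Δ ∧
    ∀ x ∈ Set.extremePoints ℝ Δ, ∃ n : Fin 2 → ℤ, coeLat n = x ∧ Int.gcd (n 0) (n 1) = 1

/-!
Let `v`, `w` be consecutive vertices of the polygon in counterclockwise order, and let `h` be the
linear form with `h v = h w = 1`; it agrees with the gauge `g` on the cone over `[v, w]`. Let `H`
be this cone without the ray through `w`, and `H'` the cone without the ray through `v`. The
lattice points `P` of the half-open fundamental parallelogram of `H` tile the lattice points of `H`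
under translation by `ℕ v + ℕ w`, so two geometric series give
`(t - 1)² ∑_{n ∈ H} t ^ (-h n) = ∑_{n ∈ P} t ^ (2 - h n)`.

The points of `P` with `h ≤ 1` are those of `H` with `h ≤ 1`. The reflection `n ↦ v + w - n`
replaces `h` by `2 - h` and carries the points of `P` with `h > 1` onto those of `H'` with `h < 1`.
The cones `H`, and likewise the cones `H'`, partition the nonzero lattice points, so summing over
all edges gives
`(t - 1)² ∑_{n ≠ 0} t ^ (-g n) = ∑_{n ≠ 0, g n ≤ 1} t ^ (2 - g n) + ∑_{n ≠ 0, g n < 1} t ^ (g n)`,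
where each boundary point contributes `t`.
-/

section AreaForm

variable {R M : Type*} [CommRing R] [AddCommGroup M] [Module R M] {ω : LinearMap.BilinForm R M}

/-- An area form on a module of rank two: a nondegenerate alternating form obeying Cramer's rule.
The rank enters only through Cramer's rule. Swapping the arguments, `ω.flip`, reverses the
orientation. -/
structure IsAreaForm (ω : LinearMap.BilinForm R M) : Prop where
  nondegenerate : ω.Nondegenerate
  isAlt : ω.IsAlt
  cramer : ∀ v w n, ω v w • n = ω n w • v + ω v n • w

namespace IsAreaForm

protected lemma flip (hω : IsAreaForm ω) : IsAreaForm ω.flip where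
  nondegenerate := LinearMap.flip_nondegenerate.2 hω.nondegenerate
  isAlt := hω.isAlt
  cramer v w n := (hω.cramer w v n).trans (add_comm _ _)

lemma neg_eq (hω : IsAreaForm ω) (v w : M) : -ω v w = ω w v :=
  LinearMap.BilinForm.IsAlt.neg_eq hω.isAlt v w

lemma isTorsionFree (hω : IsAreaForm ω) : Module.IsTorsionFree R M where
  isSMulRegular r hr m n hmn := sub_eq_zero.1 <| hω.nondegenerate.1 _ fun k ↦ hr.1 <| by
    simpa [sub_eq_zero, mul_sub] using congr(ω $hmn k)

lemma plucker (hω : IsAreaForm ω) (v w m n : M) :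
    ω v w * ω m n = ω v m * ω w n - ω v n * ω w m := by
  have h := congr(ω $(hω.cramer v w m) n)
  simp only [map_smul, map_add, LinearMap.add_apply, LinearMap.smul_apply, smul_eq_mul] at h
  rw [h, ← hω.neg_eq w m]
  ring

end IsAreaForm

variable (R) in
/-- The standard area form `(v, w) ↦ v₀ w₁ - v₁ w₀` of the plane. -/
def detForm : LinearMap.BilinForm R (Fin 2 → R) :=
  Matrix.toBilin' !![0, 1; -1, 0]

lemma detForm_apply (v w : Fin 2 → R) : detForm R v w = v 0 * w 1 - v 1 * w 0 := by
  simp [detForm, Matrix.toBilin'_apply, Fin.sum_univ_two, sub_eq_add_neg]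

variable (R) in
lemma isAreaForm_detForm : IsAreaForm (detForm R) where
  nondegenerate := by
    have hrefl : (detForm R).IsRefl := fun v w h ↦ by
      rw [detForm_apply] at h ⊢
      linear_combination -h
    refine hrefl.nondegenerate_iff_separatingLeft.2 fun v hv ↦ ?_
    ext i
    fin_cases i
    · simpa [detForm_apply] using hv ![0, 1]
    · simpa [detForm_apply] using hv ![1, 0]
  isAlt v := by
    rw [detForm_apply]
    ring
  cramer v w n := by
    ext i
    fin_cases i <;> simp [detForm_apply] <;> ring

variable [LinearOrder R]

/-- The half-open cone swept counterclockwise from `v` (included) to `w`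
(excluded). The opposite half-open cone, without `v` and with `w`, is
`halfOpenCone ω.flip w v`. -/
def halfOpenCone (ω : LinearMap.BilinForm R M) (v w : M) : Set M :=
  {n | 0 ≤ ω v n ∧ 0 < ω n w}

/-- `v` and `w` are angularly consecutive members of `V`: they span a convex cone, oriented
counterclockwise, whose interior contains no member of `V`. When `V` is the vertex set of a
polygon around the origin, these are its edges. -/
structure IsEdge (ω : LinearMap.BilinForm R M) (V : Finset M) (v w : M) : Prop where
  left_mem : v ∈ V
  right_mem : w ∈ V
  pos : 0 < ω v w
  nonpos : ∀ u ∈ V, 0 < ω v u → ω u w ≤ 0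

variable {V : Finset M} {v w v' w' n u : M}

lemma IsEdge.flip (h : IsEdge ω V v w) : IsEdge ω.flip V w v where
  left_mem := h.right_mem
  right_mem := h.left_mem
  pos := h.pos
  nonpos u hu huw := not_lt.1 fun hvu ↦ (h.nonpos u hu hvu).not_gt huw

variable (ω V) in
/-- The pairs `(v, w)` spanning an edge. -/
def edgeSet : Set (M × M) := {e | IsEdge ω V e.1 e.2}

lemma finite_edgeSet : (edgeSet ω V).Finite :=
  (V ×ˢ V).finite_toSet.subset fun _ he ↦ by simp [he.left_mem, he.right_mem]

lemma bijOn_swap_edgeSet : Set.BijOn Prod.swap (edgeSet ω V) (edgeSet ω.flip V) :=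
  ⟨fun _ he ↦ IsEdge.flip he, Prod.swap_injective.injOn,
    fun e he ↦ ⟨e.swap, IsEdge.flip he, e.swap_swap⟩⟩

variable [IsStrictOrderedRing R]

lemma IsAreaForm.sameRay (hω : IsAreaForm ω) (hu : 0 < ω n u) (hv : 0 < ω n v)
    (huv : ω u v = 0) : SameRay R u v := by
  have h := hω.cramer n u v
  rw [← hω.neg_eq u v, huv, neg_zero, zero_smul, zero_add] at h
  exact .inr <| .inr ⟨_, _, hv, hu, h.symm⟩

lemma IsAreaForm.exists_forall_nonpos (hω : IsAreaForm ω) {S : Finset M} (hS : S.Nonempty)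
    (hn : ∀ u ∈ S, 0 < ω n u) : ∃ w ∈ S, ∀ u ∈ S, ω u w ≤ 0 := by
  induction hS using Finset.Nonempty.cons_induction with
  | singleton a => exact ⟨a, by simp, by simp [hω.isAlt a]⟩
  | cons a S _ _ ih =>
    simp only [Finset.mem_cons, forall_eq_or_imp] at hn
    obtain ⟨w, hwS, hw⟩ := ih hn.2
    rcases le_or_gt (ω a w) 0 with haw | haw
    · exact ⟨w, by simp [hwS], by simpa [haw] using hw⟩
    · refine ⟨a, by simp, (Finset.forall_mem_cons _ _).2 ⟨(hω.isAlt a).le, fun u hu ↦ ?_⟩⟩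
      refine nonpos_of_mul_nonpos_right ?_ (hn.2 w hwS)
      rw [hω.plucker, ← hω.neg_eq a w, ← hω.neg_eq u w]
      nlinarith [mul_pos (hn.2 u hu) haw, mul_nonneg hn.1.le (neg_nonneg.2 (hw u hu))]

lemma IsAreaForm.exists_isEdge_mem (hω : IsAreaForm ω) (hspan : ∀ m ≠ 0, ∃ u ∈ V, 0 < ω m u)
    (hn : n ≠ 0) : ∃ v w, IsEdge ω V v w ∧ n ∈ halfOpenCone ω v w := by
  obtain ⟨w, hw, hw_first⟩ := hω.exists_forall_nonpos (S := V.filter (0 < ω n ·)) (n := n)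
    (by simpa [Finset.Nonempty] using hspan n hn) (by simp)
  rw [Finset.mem_filter] at hw
  have hw0 : -w ≠ 0 := fun h ↦ by simp [neg_eq_zero.1 h] at hw
  obtain ⟨v, hv, hv_last⟩ := hω.flip.exists_forall_nonpos (S := V.filter (0 < ω · w)) (n := w)
    (by simpa [Finset.Nonempty, hω.neg_eq] using hspan (-w) hw0) (by simp)
  rw [Finset.mem_filter] at hv
  refine ⟨v, w, ⟨hv.1, hw.1, hv.2, fun u hu huv ↦ ?_⟩, ?_, hw.2⟩
  · by_contra! huw
    exact (hv_last u (Finset.mem_filter.2 ⟨hu, huw⟩)).not_gt huv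
  · by_contra! hvn
    have hnv : 0 < ω n v := by rw [← hω.neg_eq]; exact neg_pos.2 hvn
    exact (hw_first v (Finset.mem_filter.2 ⟨hv.1, hnv⟩)).not_gt hv.2

lemma IsEdge.nonpos_of_mem (hω : IsAreaForm ω) (h : IsEdge ω V v w) (hn : n ∈ halfOpenCone ω v w)
    (hu : u ∈ V) (hnu : 0 < ω n u) : ω u w ≤ 0 := by
  rcases lt_or_ge 0 (ω v u) with hvu | hvu
  · exact h.nonpos u hu hvu
  · by_contra! huw
    have := hω.plucker v n w u
    rw [← hω.neg_eq u w] at this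
    nlinarith [mul_nonneg hn.1 huw.le, mul_nonneg (neg_nonneg.2 hvu) hn.2.le, mul_pos h.pos hnu]

lemma IsEdge.eq_and_eq (hω : IsAreaForm ω)
    (hray : (V : Set M).Pairwise fun u v ↦ ¬SameRay R u v) (h : IsEdge ω V v w)
    (h' : IsEdge ω V v' w') (hn : n ∈ halfOpenCone ω v w) (hn' : n ∈ halfOpenCone ω v' w') :
    v = v' ∧ w = w' := by
  have hw : w = w' := by
    refine hray.eq h.right_mem h'.right_mem (not_not.2 (hω.sameRay hn.2 hn'.2 ?_))
    refine (h'.nonpos_of_mem hω hn' h.right_mem hn.2).antisymm ?_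
    rw [← hω.neg_eq]
    exact neg_nonneg.2 (h.nonpos_of_mem hω hn h'.right_mem hn'.2)
  subst hw
  refine ⟨hray.eq h.left_mem h'.left_mem (not_not.2 ?_), rfl⟩
  refine hω.flip.sameRay (n := w) h.pos h'.pos (le_antisymm ?_ ?_)
  · exact not_lt.1 fun hlt ↦ (h'.nonpos v h.left_mem hlt).not_gt h.pos
  · rw [← hω.flip.neg_eq, neg_nonneg]
    exact not_lt.1 fun hlt ↦ (h.nonpos v' h'.left_mem hlt).not_gt h'.pos

lemma IsAreaForm.biUnion_halfOpenCone (hω : IsAreaForm ω) (hspan : ∀ m ≠ 0, ∃ u ∈ V, 0 < ω m u) :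
    ⋃ e ∈ edgeSet ω V, halfOpenCone ω e.1 e.2 = {0}ᶜ := by
  ext n
  simp only [Set.mem_iUnion, exists_prop, Prod.exists, Set.mem_compl_singleton_iff]
  refine ⟨?_, hω.exists_isEdge_mem hspan⟩
  rintro ⟨v, w, -, hn⟩ rfl
  simpa using hn.2

lemma IsAreaForm.pairwiseDisjoint_halfOpenCone (hω : IsAreaForm ω)
    (hray : (V : Set M).Pairwise fun u v ↦ ¬SameRay R u v) :
    (edgeSet ω V).PairwiseDisjoint fun e ↦ halfOpenCone ω e.1 e.2 := by
  intro e he e' he' hne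
  refine Set.disjoint_left.2 fun n hn hn' ↦ hne ?_
  exact Prod.ext_iff.2 (IsEdge.eq_and_eq hω hray he he' hn hn')

lemma IsAreaForm.finsum_edgeSet_halfOpenCone (hω : IsAreaForm ω)
    (hspan : ∀ m ≠ 0, ∃ u ∈ V, 0 < ω m u) (hray : (V : Set M).Pairwise fun u v ↦ ¬SameRay R u v)
    {s : Set M} (hs : s.Finite) {N : Type*} [AddCommMonoid N] (f : M → N) :
    ∑ᶠ e ∈ edgeSet ω V, ∑ᶠ n ∈ halfOpenCone ω e.1 e.2 ∩ s, f n = ∑ᶠ n ∈ {0}ᶜ ∩ s, f n := by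
  rw [← hω.biUnion_halfOpenCone hspan, Set.iUnion₂_inter]
  refine (finsum_mem_biUnion ?_ finite_edgeSet fun e _ ↦ hs.subset Set.inter_subset_right).symm
  exact (hω.pairwiseDisjoint_halfOpenCone hray).mono fun e ↦ Set.inter_subset_left

lemma IsAreaForm.finsum_edgeSet_halfOpenCone_flip (hω : IsAreaForm ω)
    (hspan : ∀ m ≠ 0, ∃ u ∈ V, 0 < ω m u) (hray : (V : Set M).Pairwise fun u v ↦ ¬SameRay R u v)
    {s : Set M} (hs : s.Finite) {N : Type*} [AddCommMonoid N] (f : M → N) :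
    ∑ᶠ e ∈ edgeSet ω V, ∑ᶠ n ∈ halfOpenCone ω.flip e.2 e.1 ∩ s, f n = ∑ᶠ n ∈ {0}ᶜ ∩ s, f n := by
  have hspan_flip : ∀ m ≠ 0, ∃ u ∈ V, 0 < ω.flip m u := fun m hm ↦ by
    simpa [hω.neg_eq] using hspan (-m) (neg_ne_zero.2 hm)
  rw [← hω.flip.finsum_edgeSet_halfOpenCone hspan_flip hray hs]
  exact finsum_mem_eq_of_bijOn Prod.swap bijOn_swap_edgeSet fun _ _ ↦ rfl

end AreaForm

section Lattice

variable {M : Type*} [AddCommGroup M] {ω : LinearMap.BilinForm ℤ M} {v w m n : M} {t : ℝ}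

variable (ω v w) in
/-- The additive functional taking the value `1` at `v` and at `w`. It is the gauge of a polygon on
the cone over its edge `[v, w]`. -/
def edgeHeight : M →+ ℝ where
  toFun n := ((ω n w + ω v n : ℤ) : ℝ) / ω v w
  map_zero' := by simp
  map_add' m n := by
    simp only [map_add, LinearMap.add_apply, Int.cast_add]
    ring

lemma edgeHeight_apply : edgeHeight ω v w n = ((ω n w + ω v n : ℤ) : ℝ) / ω v w := rfl

lemma edgeHeight_flip : edgeHeight ω.flip w v = edgeHeight ω v w := by
  ext n
  simp [edgeHeight_apply, add_comm]

lemma edgeHeight_le_one_iff (hD : 0 < ω v w) :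
    edgeHeight ω v w n ≤ 1 ↔ ω n w + ω v n ≤ ω v w := by
  rw [edgeHeight_apply, div_le_one (by exact_mod_cast hD), Int.cast_le]

lemma edgeHeight_lt_one_iff (hD : 0 < ω v w) :
    edgeHeight ω v w n < 1 ↔ ω n w + ω v n < ω v w := by
  rw [edgeHeight_apply, div_lt_one (by exact_mod_cast hD), Int.cast_lt]

lemma IsAreaForm.edgeHeight_left (hω : IsAreaForm ω) (hD : 0 < ω v w) :
    edgeHeight ω v w v = 1 := by
  rw [edgeHeight_apply, hω.isAlt v, add_zero, div_self (by exact_mod_cast hD.ne')]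

lemma IsAreaForm.edgeHeight_right (hω : IsAreaForm ω) (hD : 0 < ω v w) :
    edgeHeight ω v w w = 1 := by
  rw [← edgeHeight_flip, hω.flip.edgeHeight_left hD]

variable (ω v w) in
/-- The lattice points of the half-open parallelogram spanned by `v` and `w`, whose translates
by `ℕ v + ℕ w` tile `halfOpenCone ω v w`. -/
def halfOpenParallelogram : Set M :=
  {n | ω v n ∈ Set.Ico 0 (ω v w) ∧ ω n w ∈ Set.Ioc 0 (ω v w)}

lemma IsAreaForm.eq_of_apply_eq (hω : IsAreaForm ω) (hD : 0 < ω v w) (hv : ω v m = ω v n)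
    (hw : ω m w = ω n w) : m = n := by
  have := hω.isTorsionFree
  refine smul_right_injective M hD.ne' ?_
  simp only [hω.cramer v w, hv, hw]

lemma IsAreaForm.finite_halfOpenParallelogram (hω : IsAreaForm ω) (hD : 0 < ω v w) :
    (halfOpenParallelogram ω v w).Finite :=
  .of_injOn (f := fun n ↦ (ω v n, ω n w)) (fun _ hn ↦ Set.mk_mem_prod hn.1 hn.2)
    (fun _ _ _ _ h ↦ hω.eq_of_apply_eq hD (congrArg Prod.fst h) (congrArg Prod.snd h))
    ((Set.finite_Ico _ _).prod (Set.finite_Ioc _ _))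

variable (ω v w) in
/-- Translates of the fundamental parallelogram by `ℕ v + ℕ w`. -/
def tile (x : halfOpenParallelogram ω v w × ℕ × ℕ) : M :=
  x.1 + (x.2.1 • v + x.2.2 • w)

lemma IsAreaForm.apply_tile (hω : IsAreaForm ω) (p : halfOpenParallelogram ω v w) (i j : ℕ) :
    ω v (tile ω v w (p, i, j)) = ω v p + j * ω v w ∧
      ω (tile ω v w (p, i, j)) w = ω p w + i * ω v w := by
  simp [tile, hω.isAlt v, hω.isAlt w]

lemma IsAreaForm.edgeHeight_tile (hω : IsAreaForm ω) (hD : 0 < ω v w)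
    (p : halfOpenParallelogram ω v w) (i j : ℕ) :
    edgeHeight ω v w (tile ω v w (p, i, j)) = edgeHeight ω v w p + (i + j) := by
  simp [tile, hω.edgeHeight_left hD, hω.edgeHeight_right hD]

lemma IsAreaForm.tile_injective (hω : IsAreaForm ω) (hD : 0 < ω v w) :
    Function.Injective (tile ω v w) := by
  rintro ⟨p, i, j⟩ ⟨q, k, l⟩ h
  have hv : ω v p + j * ω v w = ω v q + l * ω v w := by
    rw [← (hω.apply_tile p i j).1, h, (hω.apply_tile q k l).1]
  have hw : ω p w + i * ω v w = ω q w + k * ω v w := by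
    rw [← (hω.apply_tile p i j).2, h, (hω.apply_tile q k l).2]
  obtain rfl : j = l := by
    refine Int.ofNat_inj.1 <| (existsUnique_sub_zsmul_mem_Ico hD (ω v p + j * ω v w) 0).unique ?_ ?_
    · simpa using p.2.1
    · simpa [hv] using q.2.1
  obtain rfl : i = k := by
    refine Int.ofNat_inj.1 <| (existsUnique_sub_zsmul_mem_Ioc hD (ω p w + i * ω v w) 0).unique ?_ ?_
    · simpa using p.2.2
    · simpa [hw] using q.2.2
  have hpq : p = q := Subtype.ext <| hω.eq_of_apply_eq hD (by simpa using hv) (by simpa using hw)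
  rw [hpq]

lemma IsAreaForm.range_tile (hω : IsAreaForm ω) (hD : 0 < ω v w) :
    Set.range (tile ω v w) = halfOpenCone ω v w := by
  ext n
  constructor
  · rintro ⟨⟨p, i, j⟩, rfl⟩
    obtain ⟨hv, hw⟩ := hω.apply_tile p i j
    constructor
    · rw [hv]
      have := p.2.1.1
      positivity
    · rw [hw]
      have := p.2.2.1
      positivity
  · rintro ⟨hv, hw⟩
    obtain ⟨j, hj, -⟩ := existsUnique_sub_zsmul_mem_Ico hD (ω v n) 0
    obtain ⟨i, hi, -⟩ := existsUnique_sub_zsmul_mem_Ioc hD (ω n w) 0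
    simp only [zero_add, smul_eq_mul] at hi hj
    lift j to ℕ using by have := hj.2; by_contra! hneg; nlinarith
    lift i to ℕ using by have := hi.2; by_contra! hneg; nlinarith
    refine ⟨⟨⟨n - (i • v + j • w), ?_, ?_⟩, i, j⟩, by simp [tile]⟩
    · simpa [hω.isAlt v] using hj
    · simpa [hω.isAlt w] using hi

lemma hasSum_mul_of_nonneg {ι κ : Type*} {f : ι → ℝ} {g : κ → ℝ} {a b : ℝ} (hf : HasSum f a)
    (hg : HasSum g b) (hf0 : 0 ≤ f) (hg0 : 0 ≤ g) :
    HasSum (fun x : ι × κ ↦ f x.1 * g x.2) (a * b) :=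
  hf.mul hg (hf.summable.mul_of_nonneg hg.summable hf0 hg0)

lemma hasSum_mul_rpow_neg_natCast (ht : 1 < t) :
    HasSum (fun i : ℕ ↦ (t - 1) * t ^ (-(i : ℝ))) t := by
  have t0 : 0 < t := by positivity
  have h := (hasSum_geometric_of_lt_one (inv_nonneg.2 t0.le)
    (inv_lt_one_of_one_lt₀ ht)).mul_left (t - 1)
  have ht' : (t - 1) * (1 - t⁻¹)⁻¹ = t := by
    have := sub_ne_zero.2 ht.ne'
    field_simp
  simpa [ht', Real.rpow_neg t0.le] using h

lemma IsAreaForm.hasSum_halfOpenCone (hω : IsAreaForm ω) (hD : 0 < ω v w) (ht : 1 < t) :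
    HasSum (fun n : halfOpenCone ω v w ↦ (t - 1) ^ 2 * t ^ (-edgeHeight ω v w n))
      (∑ᶠ n ∈ halfOpenParallelogram ω v w, t ^ (2 - edgeHeight ω v w n)) := by
  have t0 : 0 < t := by positivity
  have := (hω.finite_halfOpenParallelogram hD).fintype
  have hgeom := hasSum_mul_rpow_neg_natCast ht
  have hgeom_nonneg : 0 ≤ fun i : ℕ ↦ (t - 1) * t ^ (-(i : ℝ)) := fun i ↦
    mul_nonneg (sub_nonneg.2 ht.le) (Real.rpow_nonneg t0.le _)
  have hsum := hasSum_mul_of_nonneg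
    (hasSum_fintype fun p : halfOpenParallelogram ω v w ↦ t ^ (-edgeHeight ω v w p))
    (hasSum_mul_of_nonneg hgeom hgeom hgeom_nonneg hgeom_nonneg)
    (fun p ↦ Real.rpow_nonneg t0.le _) (fun x ↦ mul_nonneg (hgeom_nonneg _) (hgeom_nonneg _))
  rw [← hω.range_tile hD]
  refine ((hω.tile_injective hD).hasSum_range_iff
    (f := fun n ↦ (t - 1) ^ 2 * t ^ (-edgeHeight ω v w n))).2 ?_
  convert hsum using 1
  · funext ⟨p, i, j⟩
    rw [Function.comp_apply, hω.edgeHeight_tile hD, neg_add, neg_add, Real.rpow_add t0,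
      Real.rpow_add t0]
    ring
  · rw [← finsum_set_coe_eq_finsum_mem (halfOpenParallelogram ω v w), finsum_eq_sum_of_fintype,
      Finset.sum_mul]
    refine Finset.sum_congr rfl fun p _ ↦ ?_
    rw [sub_eq_neg_add, Real.rpow_add t0, Real.rpow_two, sq]

lemma halfOpenParallelogram_inter_edgeHeight_le (hD : 0 < ω v w) :
    halfOpenParallelogram ω v w ∩ {n | edgeHeight ω v w n ≤ 1} =
      halfOpenCone ω v w ∩ {n | edgeHeight ω v w n ≤ 1} := by
  ext n
  simp only [halfOpenParallelogram, halfOpenCone, Set.mem_inter_iff, Set.mem_ofPred_eq, Set.mem_Ico,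
    Set.mem_Ioc, edgeHeight_le_one_iff hD]
  omega

lemma IsAreaForm.bijOn_reflect (hω : IsAreaForm ω) (hD : 0 < ω v w) :
    Set.BijOn (fun n ↦ v + w - n)
      (halfOpenParallelogram ω v w \ {n | edgeHeight ω v w n ≤ 1})
      (halfOpenCone ω.flip w v ∩ {n | edgeHeight ω v w n < 1}) := by
  refine Set.BijOn.mk ?_ (fun _ _ _ _ h ↦ sub_right_injective h)
    fun n hn ↦ ⟨v + w - n, ?_, sub_sub_cancel _ _⟩
  all_goals
    simp only [halfOpenParallelogram, halfOpenCone, Set.mem_inter_iff, Set.mem_sdiff,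
      Set.mem_ofPred_eq, Set.mem_Ico, Set.mem_Ioc, edgeHeight_le_one_iff hD,
      edgeHeight_lt_one_iff hD, LinearMap.BilinForm.flip_apply, Set.MapsTo, map_sub, map_add,
      LinearMap.sub_apply, LinearMap.add_apply, hω.isAlt v, hω.isAlt w] at *
    omega

lemma IsAreaForm.finsum_halfOpenParallelogram (hω : IsAreaForm ω) (hD : 0 < ω v w) :
    ∑ᶠ n ∈ halfOpenParallelogram ω v w, t ^ (2 - edgeHeight ω v w n) =
      ∑ᶠ n ∈ halfOpenCone ω v w ∩ {n | edgeHeight ω v w n ≤ 1}, t ^ (2 - edgeHeight ω v w n) +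
        ∑ᶠ n ∈ halfOpenCone ω.flip w v ∩ {n | edgeHeight ω v w n < 1},
          t ^ edgeHeight ω v w n := by
  rw [← finsum_mem_inter_add_sdiff {n | edgeHeight ω v w n ≤ 1}
    (hω.finite_halfOpenParallelogram hD), halfOpenParallelogram_inter_edgeHeight_le hD]
  congr 1
  refine finsum_mem_eq_of_bijOn _ (hω.bijOn_reflect hD) fun n _ ↦ ?_
  simp only [map_sub, map_add, hω.edgeHeight_left hD, hω.edgeHeight_right hD]
  norm_num

end Lattice

section Gauge

lemma finsum_mem_const {α R : Type*} [Semiring R] {s : Set α} (hs : s.Finite) (c : R) :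
    ∑ᶠ _n ∈ s, c = s.ncard * c := by
  rw [finsum_mem_eq_finite_toFinset_sum _ hs, Finset.sum_const, nsmul_eq_mul,
    Set.ncard_eq_toFinset_card _ hs]

variable {M : Type*} [AddCommGroup M] {ω : LinearMap.BilinForm ℤ M} {V : Finset M} {g : M → ℝ}
  {v w n : M} {t : ℝ}

/-- `g` is the restriction to the lattice `M` of the gauge of the convex hull of `V`, where every
member of `V` is a vertex: a sublinear function equal to `1` on `V` and dominating every additive
functional bounded by `1` on `V`. -/
structure IsGaugeOf (V : Finset M) (g : M → ℝ) : Prop where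
  add_le : ∀ m n, g (m + n) ≤ g m + g n
  zsmul : ∀ k : ℤ, 0 ≤ k → ∀ n, g (k • n) = k * g n
  eq_one : ∀ v ∈ V, g v = 1
  le_of_le_one : ∀ φ : M →+ ℝ, (∀ v ∈ V, φ v ≤ 1) → ∀ n, φ n ≤ g n

namespace IsGaugeOf

lemma map_zero (hg : IsGaugeOf V g) : g 0 = 0 := by
  simpa using hg.zsmul 0 le_rfl 0

lemma addMonoidHom_nonpos (hg : IsGaugeOf V g) {φ : M →+ ℝ} (hφ : ∀ v ∈ V, φ v ≤ 0) (n : M) :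
    φ n ≤ 0 := by
  by_contra! hn
  obtain ⟨k, hk⟩ := Archimedean.arch (g n + 1) hn
  have := hg.le_of_le_one (k • φ) (fun v hv ↦ ?_) n
  · rw [AddMonoidHom.nsmul_apply] at this
    linarith
  · exact (nsmul_nonpos (hφ v hv) k).trans zero_le_one

lemma exists_pos (hg : IsGaugeOf V g) (hω : IsAreaForm ω) (hn : n ≠ 0) : ∃ u ∈ V, 0 < ω n u := by
  by_contra! h
  refine hn (hω.nondegenerate.1 n fun m ↦ ?_)
  have hle (m : M) : ω n m ≤ 0 := by
    have := hg.addMonoidHom_nonpos (φ := (Int.castAddHom ℝ).comp (ω n).toAddMonoidHom)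
      (fun u hu ↦ by simpa using h u hu) m
    simpa using this
  exact (hle m).antisymm (by simpa using hle (-m))

lemma pairwise_not_sameRay (hg : IsGaugeOf V g) (hω : IsAreaForm ω) :
    (V : Set M).Pairwise fun u v ↦ ¬SameRay ℤ u v := by
  have := hω.isTorsionFree
  have hne {u : M} (hu : u ∈ V) : u ≠ 0 := by
    rintro rfl
    simpa [hg.map_zero] using hg.eq_one 0 hu
  rintro u hu v hv huv hray
  obtain ⟨r, s, hr, hs, hrs⟩ := hray.exists_pos (hne hu) (hne hv)
  have hgrs := congrArg g hrs
  rw [hg.zsmul r hr.le, hg.zsmul s hs.le, hg.eq_one u hu, hg.eq_one v hv, mul_one, mul_one,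
    Int.cast_inj] at hgrs
  subst hgrs
  exact huv (smul_right_injective M hr.ne' hrs)

lemma mul_le (hg : IsGaugeOf V g) {r p q : ℤ} (hr : 0 ≤ r) (hp : 0 ≤ p) (hq : 0 ≤ q) {a b c : M}
    (h : r • c = p • a + q • b) : r * g c ≤ p * g a + q * g b := by
  rw [← hg.zsmul r hr, h, ← hg.zsmul p hp, ← hg.zsmul q hq]
  exact hg.add_le _ _

lemma edgeHeight_le_one (hg : IsGaugeOf V g) (hω : IsAreaForm ω) (h : IsEdge ω V v w)
    (hn : n ∈ V) : edgeHeight ω v w n ≤ 1 := by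
  rw [edgeHeight_le_one_iff h.pos]
  have hgv := hg.eq_one v h.left_mem
  have hgw := hg.eq_one w h.right_mem
  have hgn := hg.eq_one n hn
  have hcramer := hω.cramer v w n
  -- If `n` lies beyond `w` (or `v`), Cramer's rule writes a multiple of that vertex as a
  -- nonnegative combination of `n` and the other one, and sublinearity of `g` gives the bound.
  rcases lt_or_ge 0 (ω v n) with hvn | hvn
  · have hnw := h.nonpos n hn hvn
    have hle := hg.mul_le hvn.le h.pos.le (neg_nonneg.2 hnw) (c := w) (a := n) (b := v)
      (by rw [hcramer]; module)
    rw [hgv, hgw, hgn, mul_one, mul_one, mul_one] at hle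
    norm_cast at hle
    linarith
  · rcases lt_or_ge 0 (ω n w) with hnw | hnw
    · have hle := hg.mul_le hnw.le h.pos.le (neg_nonneg.2 hvn) (c := v) (a := n) (b := w)
        (by rw [hcramer]; module)
      rw [hgv, hgw, hgn, mul_one, mul_one, mul_one] at hle
      norm_cast at hle
      linarith
    · linarith [h.pos]

lemma eq_edgeHeight (hg : IsGaugeOf V g) (hω : IsAreaForm ω) (h : IsEdge ω V v w)
    (hv : 0 ≤ ω v n) (hw : 0 ≤ ω n w) : g n = edgeHeight ω v w n := by
  refine le_antisymm ?_
    (hg.le_of_le_one _ (fun u hu ↦ hg.edgeHeight_le_one hω h hu) n)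
  have hle := hg.mul_le h.pos.le hw hv (hω.cramer v w n)
  rw [hg.eq_one v h.left_mem, hg.eq_one w h.right_mem, mul_one, mul_one] at hle
  rw [edgeHeight_apply, le_div_iff₀ (by exact_mod_cast h.pos)]
  push_cast
  linarith

lemma pos (hg : IsGaugeOf V g) (hω : IsAreaForm ω) (hn : n ≠ 0) : 0 < g n := by
  obtain ⟨v, w, h, hv, hw⟩ := hω.exists_isEdge_mem (fun _ ↦ hg.exists_pos hω) hn
  rw [hg.eq_edgeHeight hω h hv hw.le, edgeHeight_apply]
  have := h.pos
  positivity

lemma halfOpenCone_inter_edgeHeight_le (hg : IsGaugeOf V g) (hω : IsAreaForm ω)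
    (h : IsEdge ω V v w) :
    halfOpenCone ω v w ∩ {n | edgeHeight ω v w n ≤ 1} = halfOpenCone ω v w ∩ {n | g n ≤ 1} := by
  ext n
  refine and_congr_right fun hn ↦ ?_
  simp only [Set.mem_ofPred_eq, hg.eq_edgeHeight hω h hn.1 hn.2.le]

lemma finite_le_one (hg : IsGaugeOf V g) (hω : IsAreaForm ω) : {n | g n ≤ 1}.Finite := by
  have hfin : (⋃ e ∈ edgeSet ω V, halfOpenParallelogram ω e.1 e.2).Finite :=
    finite_edgeSet.biUnion fun e he ↦ hω.finite_halfOpenParallelogram (IsEdge.pos he)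
  refine ((Set.finite_singleton 0).union hfin).subset fun n hn ↦ ?_
  rcases eq_or_ne n 0 with rfl | hn0
  · exact .inl rfl
  obtain ⟨v, w, h, hnvw⟩ := hω.exists_isEdge_mem (fun _ ↦ hg.exists_pos hω) hn0
  have hn' : n ∈ halfOpenCone ω v w ∩ {n | g n ≤ 1} := ⟨hnvw, hn⟩
  rw [← hg.halfOpenCone_inter_edgeHeight_le hω h,
    ← halfOpenParallelogram_inter_edgeHeight_le h.pos] at hn'
  exact .inr (Set.mem_biUnion (x := (v, w)) h hn'.1)

lemma hasSum_halfOpenCone (hg : IsGaugeOf V g) (hω : IsAreaForm ω) (h : IsEdge ω V v w)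
    (ht : 1 < t) :
    HasSum (fun n : halfOpenCone ω v w ↦ (t - 1) ^ 2 * t ^ (-g n))
      (∑ᶠ n ∈ halfOpenCone ω v w ∩ {n | g n ≤ 1}, t ^ (2 - g n) +
        ∑ᶠ n ∈ halfOpenCone ω.flip w v ∩ {n | g n < 1}, t ^ g n) := by
  have hcone {n : M} (hn : n ∈ halfOpenCone ω v w) : g n = edgeHeight ω v w n :=
    hg.eq_edgeHeight hω h hn.1 hn.2.le
  have hflip {n : M} (hn : n ∈ halfOpenCone ω.flip w v) : g n = edgeHeight ω v w n :=
    hg.eq_edgeHeight hω h hn.2.le hn.1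
  convert hω.hasSum_halfOpenCone h.pos ht using 1
  · funext n
    rw [hcone n.2]
  · rw [hω.finsum_halfOpenParallelogram h.pos]
    congr 1
    · refine finsum_mem_congr (hg.halfOpenCone_inter_edgeHeight_le hω h).symm fun n hn ↦ ?_
      rw [hcone hn.1]
    · refine finsum_mem_congr ?_ fun n hn ↦ by rw [hflip hn.1]
      ext n
      refine and_congr_right fun hn ↦ ?_
      simp only [Set.mem_ofPred_eq, hflip hn]

lemma hasSum_compl_zero (hg : IsGaugeOf V g) (hω : IsAreaForm ω) (ht : 1 < t) :
    HasSum (fun n : ({0}ᶜ : Set M) ↦ (t - 1) ^ 2 * t ^ (-g n))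
      (∑ᶠ n ∈ {0}ᶜ ∩ {n | g n ≤ 1}, t ^ (2 - g n) + ∑ᶠ n ∈ {0}ᶜ ∩ {n | g n < 1}, t ^ g n) := by
  have hspan (m : M) (hm : m ≠ 0) := hg.exists_pos hω hm
  have hray := hg.pairwise_not_sameRay hω
  have hfin := hg.finite_le_one hω
  have hfin_lt : {n | g n < 1}.Finite := hfin.subset fun n (hn : g n < 1) ↦ hn.le
  have hunion : ⋃ e ∈ (finite_edgeSet (ω := ω) (V := V)).toFinset, halfOpenCone ω e.1 e.2 =
      {0}ᶜ := by
    simpa using hω.biUnion_halfOpenCone hspan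
  have hsum := hasSum_sum_disjoint (f := fun n ↦ (t - 1) ^ 2 * t ^ (-g n))
    finite_edgeSet.toFinset
    (by rw [Set.Finite.coe_toFinset]; exact hω.pairwiseDisjoint_halfOpenCone hray)
    (fun e he ↦ hg.hasSum_halfOpenCone hω (finite_edgeSet.mem_toFinset.1 he) ht)
  rw [hunion, ← finsum_mem_eq_finite_toFinset_sum _ finite_edgeSet,
    finsum_mem_add_distrib finite_edgeSet, hω.finsum_edgeSet_halfOpenCone hspan hray hfin,
    hω.finsum_edgeSet_halfOpenCone_flip hspan hray hfin_lt] at hsum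
  exact hsum

lemma hasSum_mul_rpow_neg (hg : IsGaugeOf V g) (hω : IsAreaForm ω) (ht : 1 < t) :
    HasSum (fun n ↦ (t - 1) ^ 2 * t ^ (-g n))
      ((t - 1) ^ 2 + {n | g n = 1}.ncard * t +
        ∑ᶠ n ∈ {n | 0 < g n ∧ g n < 1}, (t ^ (2 - g n) + t ^ g n)) := by
  have hfin := hg.finite_le_one hω
  have hfin_boundary : {n | g n = 1}.Finite := hfin.subset fun n (hn : g n = 1) ↦ hn.le
  have hfin_interior : {n | 0 < g n ∧ g n < 1}.Finite := hfin.subset fun n hn ↦ hn.2.le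
  have hzero := hasSum_singleton 0 fun n ↦ (t - 1) ^ 2 * t ^ (-g n)
  rw [hg.map_zero, neg_zero, Real.rpow_zero, mul_one] at hzero
  have hinterior : {0}ᶜ ∩ {n | g n < 1} = {n | 0 < g n ∧ g n < 1} := by
    ext n
    exact and_congr_left fun _ ↦ ⟨hg.pos hω, fun h h0 ↦ h.ne' (h0 ▸ hg.map_zero)⟩
  have hclosed : {0}ᶜ ∩ {n | g n ≤ 1} = {n | g n = 1} ∪ {n | 0 < g n ∧ g n < 1} := by
    have hboundary : {0}ᶜ ∩ {n | g n = 1} = {n | g n = 1} :=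
      Set.inter_eq_right.2 fun n (hn : g n = 1) h0 ↦ by simp_all [hg.map_zero]
    rw [← hinterior, ← hboundary, ← Set.inter_union_distrib_left]
    congr 1
    ext n
    exact le_iff_eq_or_lt (a := g n)
  have hdisj : Disjoint {n | g n = 1} {n | 0 < g n ∧ g n < 1} :=
    Set.disjoint_left.2 fun n h1 hlt ↦ hlt.2.ne h1
  have hboundary : ∑ᶠ n ∈ {n | g n = 1}, t ^ (2 - g n) = {n | g n = 1}.ncard * t := by
    rw [← finsum_mem_const hfin_boundary]
    refine finsum_mem_congr rfl fun n hn ↦ ?_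
    rw [Set.mem_ofPred.1 hn]
    norm_num
  convert hzero.add_compl (f := fun n ↦ (t - 1) ^ 2 * t ^ (-g n))
    (hg.hasSum_compl_zero hω ht) using 1
  rw [hinterior, hclosed, finsum_mem_union hdisj hfin_boundary hfin_interior, hboundary,
    finsum_mem_add_distrib hfin_interior]
  ring

end IsGaugeOf

end Gauge

section Polytope

variable {E : Type*} [AddCommGroup E] [Module ℝ E] {s : Set E}

lemma le_gauge_of_le_one (hs : Absorbent ℝ s) {f : E →ₗ[ℝ] ℝ} (hf : ∀ x ∈ s, f x ≤ 1) (x : E) :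
    f x ≤ gauge s x := by
  refine le_csInf hs.gauge_set_nonempty ?_
  rintro r ⟨hr, y, hy, rfl⟩
  simpa using mul_le_mul_of_nonneg_left (hf y hy) hr.le

lemma gauge_eq_one_of_mem_extremePoints [TopologicalSpace E] [IsTopologicalAddGroup E]
    [ContinuousSMul ℝ E] [Nontrivial E] (hs : Convex ℝ s) (h0 : s ∈ nhds 0) {x : E}
    (hx : x ∈ s.extremePoints ℝ) : gauge s x = 1 := by
  rw [gauge_eq_one_iff_mem_frontier hs h0]
  exact ⟨subset_closure hx.1, (disjoint_interior_extremePoints s).notMem_of_mem_right hx⟩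

variable {d : ℕ}

lemma coeLat_add (m n : Fin d → ℤ) : coeLat (m + n) = coeLat m + coeLat n := by
  ext i
  simp [coeLat]

lemma coeLat_zsmul (k : ℤ) (n : Fin d → ℤ) : coeLat (k • n) = (k : ℝ) • coeLat n := by
  ext i
  simp [coeLat]

lemma exists_linearMap_coeLat (φ : (Fin d → ℤ) →+ ℝ) :
    ∃ f : (Fin d → ℝ) →ₗ[ℝ] ℝ, ∀ n, f (coeLat n) = φ n := by
  refine ⟨Fintype.linearCombination ℝ fun i ↦ φ (Pi.single i 1), fun n ↦ ?_⟩
  conv_rhs => rw [pi_eq_sum_univ' n, map_sum]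
  simp_rw [map_zsmul, zsmul_eq_mul, Fintype.linearCombination_apply, smul_eq_mul, coeLat]

lemma IsLatticePolytope.exists_extremePoints_eq {P : Set (Fin d → ℝ)} (hP : IsLatticePolytope P) :
    ∃ V : Finset (Fin d → ℤ), coeLat '' V = P.extremePoints ℝ ∧
      P = convexHull ℝ (coeLat '' V) := by
  classical
  obtain ⟨V₀, rfl⟩ := hP
  have hfin : (coeLat '' (V₀ : Set (Fin d → ℤ))).Finite := V₀.finite_toSet.image coeLat
  obtain ⟨V, hVV₀, hV⟩ := Set.subset_image_iff.1 <|
    extremePoints_convexHull_subset (𝕜 := ℝ) (A := coeLat '' (V₀ : Set (Fin d → ℤ)))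
  lift V to Finset (Fin d → ℤ) using V₀.finite_toSet.subset hVV₀
  have hcompact := hfin.isCompact_convexHull (𝕜 := ℝ)
  have hclosed : IsClosed (convexHull ℝ (coeLat '' (V : Set (Fin d → ℤ)))) :=
    ((V.finite_toSet.image coeLat).isCompact_convexHull (𝕜 := ℝ)).isClosed
  refine ⟨V, hV, ?_⟩
  rw [← hclosed.closure_eq, hV,
    closure_convexHull_extremePoints hcompact (convex_convexHull ℝ _)]

lemma IsLatticePolytope.exists_isGaugeOf [NeZero d] {P : Set (Fin d → ℝ)}
    (hP : IsLatticePolytope P) (h0 : 0 ∈ interior P) :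
    ∃ V, IsGaugeOf V fun n ↦ gauge P (coeLat n) := by
  obtain ⟨V, hV, hPV⟩ := hP.exists_extremePoints_eq
  have hconv : Convex ℝ P := hPV ▸ convex_convexHull ℝ _
  have hnhds : P ∈ nhds 0 := mem_interior_iff_mem_nhds.1 h0
  have habs : Absorbent ℝ P := absorbent_nhds_zero hnhds
  refine ⟨V, ?_, fun k hk n ↦ ?_, fun v hv ↦ ?_, fun φ hφ n ↦ ?_⟩
  · intro m n
    rw [coeLat_add]
    exact gauge_add_le hconv habs _ _
  · rw [coeLat_zsmul, gauge_smul_of_nonneg (by exact_mod_cast hk), smul_eq_mul]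
  · exact gauge_eq_one_of_mem_extremePoints hconv hnhds (hV ▸ Set.mem_image_of_mem coeLat hv)
  · obtain ⟨f, hf⟩ := exists_linearMap_coeLat φ
    have hfP : P ⊆ {x | f x ≤ 1} := by
      rw [hPV]
      refine convexHull_min ?_ (convex_halfSpace_le f.isLinear 1)
      rintro _ ⟨v, hv, rfl⟩
      exact (hf v).trans_le (hφ v hv)
    rw [← hf]
    exact le_gauge_of_le_one habs hfP _

end Polytope

theorem LDP_gauge_series_general (Δ : Set (Fin 2 → ℝ)) (hΔ : IsLatticePolytope Δ)
    (h0 : 0 ∈ interior Δ) (t : ℝ) (ht : 1 < t) :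
    Summable (fun n : Fin 2 → ℤ => t ^ (-(gauge Δ (coeLat n)))) ∧
      (t - 1) ^ 2 * ∑' n : Fin 2 → ℤ, t ^ (-(gauge Δ (coeLat n))) =
        (t - 1) ^ 2 + ({n : Fin 2 → ℤ | gauge Δ (coeLat n) = 1}.ncard : ℝ) * t +
          ∑ᶠ n ∈ {n : Fin 2 → ℤ | 0 < gauge Δ (coeLat n) ∧ gauge Δ (coeLat n) < 1},
            (t ^ (2 - gauge Δ (coeLat n)) + t ^ (gauge Δ (coeLat n))) := by
  obtain ⟨V, hV⟩ := hΔ.exists_isGaugeOf h0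
  have hsum := hV.hasSum_mul_rpow_neg (isAreaForm_detForm ℤ) ht
  have ht2 : (t - 1) ^ 2 ≠ 0 := pow_ne_zero 2 (sub_ne_zero.2 ht.ne')
  exact ⟨(summable_mul_left_iff ht2).1 hsum.summable, tsum_mul_left.symm.trans hsum.tsum_eq⟩

theorem LDP_gauge_series (Δ : Set (Fin 2 → ℝ)) (hΔ : IsLDP Δ) (t : ℝ) (ht : 1 < t) :
    Summable (fun n : Fin 2 → ℤ => t ^ (-(gauge Δ (coeLat n)))) ∧
      (t - 1) ^ 2 * ∑' n : Fin 2 → ℤ, t ^ (-(gauge Δ (coeLat n))) =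
        (t - 1) ^ 2 + ({n : Fin 2 → ℤ | gauge Δ (coeLat n) = 1}.ncard : ℝ) * t +
          ∑ᶠ n ∈ {n : Fin 2 → ℤ | 0 < gauge Δ (coeLat n) ∧ gauge Δ (coeLat n) < 1},
            (t ^ (2 - gauge Δ (coeLat n)) + t ^ (gauge Δ (coeLat n))) :=
  LDP_gauge_series_general Δ hΔ.1 hΔ.2.2.1 t ht

end
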